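/- Let g, ψ : ℝ → ℂ be Schwartz functions and let Δ ⊆ ℝ be a Borel set. Denote by ĥ(k) = (2π)^{−1/2} ∫_ℝ e^{−ikx} h(x) dx the Fourier transform. Then (1/(2π)) ∫_{ℝ×Δ} |∫_ℝ e^{−ip(x−q)} conj(g(x−q)) ψ(x) dx|² d(q,p) = ∫_ℝ (1_Δ ∗ |ĝ|²)(k) |ψ̂(k)|² dk, where (1_Δ ∗ |ĝ|²)(k) = ∫_Δ |ĝ(k−y)|² dy. In other words, the momentum marginal of the phase-space observable generated by g is the smearing of the momentum observable by the convolution kernel 1_Δ ∗ |ĝ|². -/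

import Mathlib

open MeasureTheory

noncomputable section

/-- The Fourier transform with the normalization `ĥ(k) = (2π)^{−1/2} ∫ e^{−ikx} h(x) dx`. -/
def fourierT (h : ℝ → ℂ) (k : ℝ) : ℂ :=
  ((Real.sqrt (2 * Real.pi))⁻¹ : ℝ) *
    ∫ x : ℝ, Complex.exp (-(Complex.I * (k : ℂ) * (x : ℂ))) * h x

/-!
For fixed `p`, the function `q ↦ ⟨U_{q,p} g, ψ⟩` is the cross-correlation of `ψ` with the modulated
function `e^{ip·} g`, so its Fourier transform has modulus `|ĝ(k - p)| |ψ̂(k)|` up to normalization.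
Plancherel's theorem in `q` followed by Tonelli's theorem in `p` gives the claim.

Plancherel's theorem holds for every integrable function if both sides are allowed to be infinite:
as soon as one of `f`, `𝓕 f` is square-integrable, the pairing with Schwartz functions identifies
`𝓕 f` with the `L²` Fourier transform of `f`.
-/

open scoped FourierTransform ComplexConjugate SchwartzMap ENNReal RealInnerProductSpace
  ContDiff Convolution Real

section Plancherel

variable {V F : Type*} [NormedAddCommGroup V] [InnerProductSpace ℝ V] [FiniteDimensional ℝ V]
  [MeasurableSpace V] [BorelSpace V] [NormedAddCommGroup F]

lemma ae_eq_of_forall_integral_schwartzMap_smul_eq [NormedSpace ℂ F] [CompleteSpace F]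
    {f f' : V → F} (hf : LocallyIntegrable f) (hf' : LocallyIntegrable f')
    (h : ∀ φ : 𝓢(V, ℂ), ∫ x, φ x • f x = ∫ x, φ x • f' x) : f =ᵐ[volume] f' := by
  refine ae_eq_of_integral_contDiff_smul_eq hf hf' fun φ hφ hφc ↦ ?_
  have hφ' : ContDiff ℝ ∞ (fun x ↦ (φ x : ℂ)) := Complex.ofRealCLM.contDiff.comp hφ
  simpa using h ((hφc.comp_left Complex.ofReal_zero).toSchwartzMap hφ')

lemma continuous_fourier_of_integrable [NormedSpace ℂ F] {f : V → F} (hf : Integrable f) :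
    Continuous (𝓕 f) :=
  VectorFourier.fourierIntegral_continuous Real.continuous_fourierChar
    (innerSL ℝ).continuous₂ hf

lemma integral_fourier_schwartzMap_smul [NormedSpace ℂ F] [CompleteSpace F] {f : V → F}
    (hf : Integrable f) (φ : 𝓢(V, ℂ)) :
    ∫ x, 𝓕 φ x • f x = ∫ x, φ x • 𝓕 f x := by
  simpa [SchwartzMap.fourier_coe] using! (VectorFourier.integral_fourierIntegral_smul_eq_flip
    (L := innerₗ V) Real.continuous_fourierChar continuous_inner φ.integrable hf)

variable [InnerProductSpace ℂ F] [CompleteSpace F]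

lemma integral_fourier_schwartzMap_smul_Lp (G : Lp (α := V) F 2) (φ : 𝓢(V, ℂ)) :
    ∫ x, 𝓕 φ x • G x = ∫ x, φ x • (𝓕 G : Lp (α := V) F 2) x := by
  have h := DFunLike.congr_fun (Lp.fourier_toTemperedDistribution_eq G) φ
  rwa [TemperedDistribution.fourier_apply, Lp.toTemperedDistribution_apply,
    Lp.toTemperedDistribution_apply] at h

lemma fourier_ae_eq_fourier_Lp_iff {f : V → F} (hf : Integrable f) (G : Lp (α := V) F 2) :
    𝓕 f =ᵐ[volume] (𝓕 G : Lp (α := V) F 2) ↔ f =ᵐ[volume] G := by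
  have hG (G : Lp (α := V) F 2) : LocallyIntegrable G := (Lp.memLp G).locallyIntegrable one_le_two
  refine ⟨fun h ↦ ae_eq_of_forall_integral_schwartzMap_smul_eq hf.locallyIntegrable (hG _)
    fun φ ↦ ?_, fun h ↦ ae_eq_of_forall_integral_schwartzMap_smul_eq
      (continuous_fourier_of_integrable hf).locallyIntegrable (hG _) fun φ ↦ ?_⟩
  · rw [← FourierTransform.fourier_fourierInv_eq (F := 𝓢(V, ℂ)) φ,
      integral_fourier_schwartzMap_smul hf, integral_fourier_schwartzMap_smul_Lp]
    exact integral_congr_ae (h.mono fun x hx ↦ by simp only [hx])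
  · rw [← integral_fourier_schwartzMap_smul hf, ← integral_fourier_schwartzMap_smul_Lp]
    exact integral_congr_ae (h.mono fun x hx ↦ by simp only [hx])

theorem eLpNorm_two_fourier {f : V → F} (hf : Integrable f) :
    eLpNorm (𝓕 f) 2 = eLpNorm f 2 := by
  by_cases hf₂ : MemLp f 2
  · have h𝓕 := (fourier_ae_eq_fourier_Lp_iff hf (hf₂.toLp f)).2 hf₂.coeFn_toLp.symm
    rw [eLpNorm_congr_ae h𝓕, eLpNorm_congr_ae hf₂.coeFn_toLp.symm, ← Lp.enorm_def, ← Lp.enorm_def,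
      enorm_eq_iff_norm_eq, Lp.norm_fourier_eq]
  by_cases h𝓕₂ : MemLp (𝓕 f) 2
  · have h := (fourier_ae_eq_fourier_Lp_iff hf (𝓕⁻ (h𝓕₂.toLp (𝓕 f)))).1 (by
      simpa using h𝓕₂.coeFn_toLp.symm)
    exact absurd ((Lp.memLp _).ae_eq h.symm) hf₂
  have eq_top {u : V → F} (hu : AEStronglyMeasurable u) (hu₂ : ¬ MemLp u 2) : eLpNorm u 2 = ⊤ := by
    simpa [MemLp, hu] using hu₂
  rw [eq_top (continuous_fourier_of_integrable hf).aestronglyMeasurable h𝓕₂,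
    eq_top hf.aestronglyMeasurable hf₂]

lemma lintegral_enorm_sq_fourier {f : V → F} (hf : Integrable f) :
    ∫⁻ ξ, ‖𝓕 f ξ‖ₑ ^ 2 = ∫⁻ x, ‖f x‖ₑ ^ 2 := by
  have eLpNorm_sq (u : V → F) : eLpNorm u 2 ^ 2 = ∫⁻ x, ‖u x‖ₑ ^ 2 := by
    simpa using eLpNorm_nnreal_pow_eq_lintegral (f := u) (μ := volume) two_ne_zero
  rw [← eLpNorm_sq, ← eLpNorm_sq, eLpNorm_two_fourier hf]

end Plancherel

section Correlation

variable {V : Type*} [NormedAddCommGroup V] [InnerProductSpace ℝ V] [FiniteDimensional ℝ V]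
  [MeasurableSpace V] [BorelSpace V]

/-- The cross-correlation `q ↦ ⟨g(· - q), f⟩` of two functions. -/
def correlation (g f : V → ℂ) (q : V) : ℂ :=
  ∫ x, conj (g (x - q)) * f x

lemma correlation_eq_convolution (g f : V → ℂ) :
    correlation g f = f ⋆[ContinuousLinearMap.mul ℂ ℂ] fun y ↦ conj (g (-y)) := by
  ext q
  simp [correlation, convolution_def, mul_comm]

lemma fourier_conj_comp_neg (g : V → ℂ) (ξ : V) :
    𝓕 (fun y ↦ conj (g (-y))) ξ = conj (𝓕 g ξ) := by
  rw [Real.fourier_eq, Real.fourier_eq, ← integral_conj, ← integral_neg_eq_self]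
  simp [Circle.smul_def, ← Circle.coe_inv_eq_conj, AddChar.map_neg_eq_inv]

lemma integrable_conj_comp_neg {g : V → ℂ} (hg : Integrable g) :
    Integrable fun y ↦ conj (g (-y)) :=
  Complex.conjLIE.integrable_comp_iff.2 hg.comp_neg

lemma fourier_correlation {g f : V → ℂ} (hg : Integrable g) (hf : Integrable f) (ξ : V) :
    𝓕 (correlation g f) ξ = conj (𝓕 g ξ) * 𝓕 f ξ := by
  rw [correlation_eq_convolution, Real.fourier_mul_convolution_eq hf (integrable_conj_comp_neg hg),
    fourier_conj_comp_neg, mul_comm]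

lemma integrable_correlation {g f : V → ℂ} (hg : Integrable g) (hf : Integrable f) :
    Integrable (correlation g f) := by
  rw [correlation_eq_convolution]
  exact hf.integrable_convolution _ (integrable_conj_comp_neg hg)

lemma lintegral_enorm_sq_correlation {g f : V → ℂ} (hg : Integrable g) (hf : Integrable f) :
    ∫⁻ q, ‖correlation g f q‖ₑ ^ 2 = ∫⁻ ξ, ‖𝓕 g ξ‖ₑ ^ 2 * ‖𝓕 f ξ‖ₑ ^ 2 := by
  rw [← lintegral_enorm_sq_fourier (integrable_correlation hg hf)]
  simp_rw [fourier_correlation hg hf, enorm_mul, mul_pow, RCLike.enorm_conj]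

/-- The modulation `x ↦ e^{2πi⟪p, x⟫} g x`, i.e. a translation by `p` in momentum space. -/
def modulation (p : V) (g : V → ℂ) (x : V) : ℂ :=
  Real.fourierChar ⟪p, x⟫ • g x

lemma fourier_modulation (p : V) (g : V → ℂ) (ξ : V) :
    𝓕 (modulation p g) ξ = 𝓕 g (ξ - p) := by
  simp_rw [Real.fourier_eq, modulation, smul_smul, ← AddChar.map_add_eq_mul, inner_sub_right,
    real_inner_comm p, neg_sub, neg_add_eq_sub]

lemma integrable_modulation {g : V → ℂ} (hg : Integrable g) (p : V) :
    Integrable (modulation p g) := by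
  have hchar : Continuous fun x ↦ Real.fourierChar ⟪p, x⟫ := by fun_prop
  exact hg.congr' (hchar.aestronglyMeasurable.smul hg.aestronglyMeasurable)
    (.of_forall fun x ↦ (Circle.norm_smul _ _).symm)

end Correlation

section WeylCoefficient

/-- The matrix coefficient `⟨U_{q,p} g, ψ⟩` of the Weyl operator `U_{q,p} = e^{−iqP} e^{ipQ}`. -/
def weylCoeff (g ψ : ℝ → ℂ) (q p : ℝ) : ℂ :=
  ∫ x : ℝ, Complex.exp (-(Complex.I * (p : ℂ) * ((x : ℂ) - (q : ℂ)))) * conj (g (x - q)) * ψ x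

lemma weylCoeff_eq_correlation (g ψ : ℝ → ℂ) (q p : ℝ) :
    weylCoeff g ψ q p = correlation (modulation (p / (2 * π)) g) ψ q := by
  refine integral_congr_ae (.of_forall fun x ↦ ?_)
  have hphase : 2 * π * ((x - q) * (p / (2 * π))) = p * (x - q) := by
    field_simp
  simp only [modulation, Circle.smul_def, Real.fourierChar_apply, smul_eq_mul, map_mul,
    ← Complex.exp_conj, RCLike.inner_apply, conj_trivial, hphase, Complex.conj_ofReal,
    Complex.conj_I]
  push_cast
  ring_nf

lemma weylCoeff_congr_ae {g g' ψ ψ' : ℝ → ℂ} (hg : g =ᵐ[volume] g') (hψ : ψ =ᵐ[volume] ψ') :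
    weylCoeff g ψ = weylCoeff g' ψ' := by
  ext q p
  have hgq := (measurePreserving_sub_right volume q).quasiMeasurePreserving.ae hg
  refine integral_congr_ae ?_
  filter_upwards [hgq, hψ] with x hgx hψx
  rw [hgx, hψx]

lemma stronglyMeasurable_weylCoeff {g ψ : ℝ → ℂ} (hg : AEStronglyMeasurable g)
    (hψ : AEStronglyMeasurable ψ) : StronglyMeasurable fun z : ℝ × ℝ ↦ weylCoeff g ψ z.1 z.2 := by
  have := hg.stronglyMeasurable_mk.measurable
  have := hψ.stronglyMeasurable_mk.measurable
  have : Measurable (starRingEnd ℂ) := Complex.continuous_conj.measurable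
  rw [weylCoeff_congr_ae hg.ae_eq_mk hψ.ae_eq_mk]
  exact StronglyMeasurable.integral_prod_right (f := fun (z : ℝ × ℝ) (x : ℝ) ↦
    Complex.exp (-(Complex.I * (z.2 : ℂ) * ((x : ℂ) - (z.1 : ℂ)))) * conj (hg.mk g (x - z.1)) *
      hψ.mk ψ x) (Measurable.stronglyMeasurable (by fun_prop))

lemma fourierT_eq_inv_sqrt_mul_fourier (h : ℝ → ℂ) (k : ℝ) :
    fourierT h k = (√(2 * π))⁻¹ * 𝓕 h (k / (2 * π)) := by
  rw [fourierT, Real.fourier_real_eq_integral_exp_smul, Complex.ofReal_inv]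
  congr 2 with x
  have hphase : -2 * π * x * (k / (2 * π)) = -(k * x) := by
    field_simp
  rw [hphase]
  push_cast
  ring_nf

lemma continuous_fourierT {h : ℝ → ℂ} (hh : Integrable h) : Continuous (fourierT h) := by
  have := continuous_fourier_of_integrable hh
  rw [funext (fourierT_eq_inv_sqrt_mul_fourier h)]
  fun_prop

lemma enorm_sq_fourier (h : ℝ → ℂ) (ξ : ℝ) :
    ‖𝓕 h ξ‖ₑ ^ 2 = ENNReal.ofReal (2 * π) * ‖fourierT h (2 * π * ξ)‖ₑ ^ 2 := by
  have hsqrt : 0 < √(2 * π) := by positivity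
  have h𝓕 : 𝓕 h ξ = (√(2 * π) : ℂ) * fourierT h (2 * π * ξ) := by
    rw [fourierT_eq_inv_sqrt_mul_fourier, Complex.ofReal_inv,
      mul_inv_cancel_left₀ (by exact_mod_cast hsqrt.ne'),
      mul_div_cancel_left₀ _ Real.two_pi_pos.ne']
  have hnorm : ‖(√(2 * π) : ℂ)‖ₑ ^ 2 = ENNReal.ofReal (2 * π) := by
    rw [← ofReal_norm, ← ENNReal.ofReal_pow (norm_nonneg _), Complex.norm_real,
      Real.norm_of_nonneg hsqrt.le, Real.sq_sqrt Real.two_pi_pos.le]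
  rw [h𝓕, enorm_mul, mul_pow, hnorm]

lemma ofReal_abs_mul_lintegral_comp_mul_left {c : ℝ} (hc : c ≠ 0) (F : ℝ → ℝ≥0∞) :
    ENNReal.ofReal |c| * ∫⁻ x, F (c * x) = ∫⁻ x, F x := by
  have hemb : MeasurableEmbedding (c * ·) := (Homeomorph.mulLeft₀ c hc).measurableEmbedding
  rw [← hemb.lintegral_map, ← smul_eq_mul, ← lintegral_smul_measure,
    Real.smul_map_volume_mul_left hc]

lemma lintegral_enorm_sq_weylCoeff {g ψ : ℝ → ℂ} (hg : Integrable g) (hψ : Integrable ψ) (p : ℝ) :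
    ∫⁻ q, ‖weylCoeff g ψ q p‖ₑ ^ 2 =
      ENNReal.ofReal (2 * π) * ∫⁻ k, ‖fourierT g (k - p)‖ₑ ^ 2 * ‖fourierT ψ k‖ₑ ^ 2 := by
  set c := 2 * π with hc
  have hc₀ : 0 < c := Real.two_pi_pos
  let F (k : ℝ) := ‖fourierT g (k - p)‖ₑ ^ 2 * ‖fourierT ψ k‖ₑ ^ 2
  have h𝓕 (ξ : ℝ) : ‖𝓕 g (ξ - p / c)‖ₑ ^ 2 * ‖𝓕 ψ ξ‖ₑ ^ 2 =
      ENNReal.ofReal c * (ENNReal.ofReal c * F (c * ξ)) := by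
    rw [enorm_sq_fourier, enorm_sq_fourier, mul_sub, mul_div_cancel₀ _ hc₀.ne']
    ring
  calc ∫⁻ q, ‖weylCoeff g ψ q p‖ₑ ^ 2
      = ∫⁻ ξ, ‖𝓕 g (ξ - p / c)‖ₑ ^ 2 * ‖𝓕 ψ ξ‖ₑ ^ 2 := by
        simp_rw [weylCoeff_eq_correlation, lintegral_enorm_sq_correlation
          (integrable_modulation hg _) hψ, fourier_modulation, hc]
    _ = ENNReal.ofReal c * (ENNReal.ofReal c * ∫⁻ ξ, F (c * ξ)) := by
        simp_rw [h𝓕, lintegral_const_mul' _ _ ENNReal.ofReal_ne_top]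
    _ = ENNReal.ofReal c * ∫⁻ k, F k := by
        rw [← ofReal_abs_mul_lintegral_comp_mul_left hc₀.ne' F, abs_of_pos hc₀]

theorem momentum_marginal_of_phase_space_observable_general {g ψ : ℝ → ℂ} (hg : Integrable g)
    (hψ : Integrable ψ) (μ : Measure ℝ) [SFinite μ] :
    ∫⁻ z, ‖weylCoeff g ψ z.1 z.2‖ₑ ^ 2 ∂(volume.prod μ) =
      ENNReal.ofReal (2 * π) *
        ∫⁻ k, (∫⁻ y, ‖fourierT g (k - y)‖ₑ ^ 2 ∂μ) * ‖fourierT ψ k‖ₑ ^ 2 := by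
  have hmeas := (stronglyMeasurable_weylCoeff hg.1 hψ.1).measurable.enorm.pow_const 2
  have hgc := continuous_fourierT hg
  have hψc := continuous_fourierT hψ
  calc ∫⁻ z, ‖weylCoeff g ψ z.1 z.2‖ₑ ^ 2 ∂(volume.prod μ)
      = ∫⁻ p, ∫⁻ q, ‖weylCoeff g ψ q p‖ₑ ^ 2 ∂volume ∂μ := lintegral_prod_symm' _ hmeas
    _ = ENNReal.ofReal (2 * π) *
          ∫⁻ p, ∫⁻ k, ‖fourierT g (k - p)‖ₑ ^ 2 * ‖fourierT ψ k‖ₑ ^ 2 ∂volume ∂μ := by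
        simp_rw [lintegral_enorm_sq_weylCoeff hg hψ]
        exact lintegral_const_mul' _ _ ENNReal.ofReal_ne_top
    _ = ENNReal.ofReal (2 * π) *
          ∫⁻ k, ∫⁻ p, ‖fourierT g (k - p)‖ₑ ^ 2 * ‖fourierT ψ k‖ₑ ^ 2 ∂μ := by
        rw [lintegral_lintegral_swap (Measurable.aemeasurable (by fun_prop))]
    _ = ENNReal.ofReal (2 * π) *
          ∫⁻ k, (∫⁻ y, ‖fourierT g (k - y)‖ₑ ^ 2 ∂μ) * ‖fourierT ψ k‖ₑ ^ 2 := by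
        have hgk (k : ℝ) : Measurable fun y ↦ ‖fourierT g (k - y)‖ₑ ^ 2 :=
          (hgc.comp (continuous_sub_left k)).measurable.enorm.pow_const 2
        simp_rw [lintegral_mul_const _ (hgk _)]

end WeylCoefficient

/-- For Schwartz functions `g, ψ` and a Borel set `Δ ⊆ ℝ`,
`(1/2π) ∫_{ℝ×Δ} |⟨U_{q,p} g, ψ⟩|² d(q,p) = ∫ (1_Δ ∗ |ĝ|²)(k) |ψ̂(k)|² dk`:
the momentum marginal of the phase-space observable generated by `g` is the smearing of
the momentum observable by the convolution kernel `1_Δ ∗ |ĝ|²`. -/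
theorem momentum_marginal_of_phase_space_observable
    (g ψ : SchwartzMap ℝ ℂ) (Δ : Set ℝ) (hΔ : MeasurableSet Δ) :
    ∫⁻ z in (Set.univ : Set ℝ) ×ˢ Δ, ENNReal.ofReal
        (‖∫ x : ℝ, Complex.exp (-(Complex.I * (z.2 : ℂ) * ((x : ℂ) - (z.1 : ℂ)))) *
            (starRingEnd ℂ) (g (x - z.1)) * ψ x‖ ^ 2) =
      ENNReal.ofReal (2 * Real.pi) *
        ∫⁻ k : ℝ, (∫⁻ y in Δ, ENNReal.ofReal (‖fourierT (⇑g) (k - y)‖ ^ 2)) *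
          ENNReal.ofReal (‖fourierT (⇑ψ) k‖ ^ 2) := by
  simpa [weylCoeff, Measure.volume_eq_prod, ← Measure.prod_restrict, ENNReal.ofReal_pow] using
    momentum_marginal_of_phase_space_observable_general g.integrable ψ.integrable
      (volume.restrict Δ)
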